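/- Let H be a group such that the cardinality of H has uncountable cofinality. If H is strongly bounded and Jónsson, then for every subset Y ⊆ H with |Y| = |H| there exists a natural number n_Y such that H = Y^{[n_Y]}. -/

import Mathlib

/-- `wordSet Y n` is the set `Y^{[n]}` of all products of length at most `n`
of elements of `Y` and their inverses. -/
def wordSet {H : Type*} [Group H] (Y : Set H) (n : ℕ) : Set H :=
  {h | ∃ m : ℕ, m ≤ n ∧ ∃ g : Fin m → H,
    (∀ i, g i ∈ Y ∨ (g i)⁻¹ ∈ Y) ∧ h = (List.ofFn g).prod}

/-- A subgroup `K` of `G` is malnormal if `K ∩ gKg⁻¹ = {1}` for all `g ∉ K`. -/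
def Malnormal {G : Type*} [Group G] (K : Subgroup G) : Prop :=
  ∀ g : G, g ∉ K → ∀ y : G, y ∈ K → g⁻¹ * y * g ∈ K → y = 1

/-- A group is strongly bounded if every action by isometries on a metric
space has bounded orbits. -/
def StronglyBounded (H : Type*) [Group H] : Prop :=
  ∀ (X : Type) (_ : MetricSpace X) (_ : MulAction H X),
    (∀ h : H, Isometry (fun x : X => h • x)) →
    ∀ x : X, Bornology.IsBounded (MulAction.orbit H x)

/-- A group is Jónsson if every proper subgroup has strictly smaller cardinality. -/
def Jonsson (H : Type*) [Group H] : Prop :=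
  ∀ K : Subgroup H, K ≠ ⊤ → Cardinal.mk K < Cardinal.mk H

theorem mem_wordSet_iff {H : Type*} [Group H] {Y : Set H} {n : ℕ} {h : H} :
    h ∈ wordSet Y n ↔
      ∃ l : List H, l.length ≤ n ∧ (∀ x ∈ l, x ∈ Y ∨ x⁻¹ ∈ Y) ∧ l.prod = h := by
  constructor
  · rintro ⟨m, hm, g, hg, rfl⟩
    refine ⟨List.ofFn g, by simpa using hm, fun x hx => ?_, rfl⟩
    obtain ⟨i, rfl⟩ := (List.mem_ofFn' g x).1 hx
    exact hg i
  · rintro ⟨l, hl, hY, rfl⟩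
    exact ⟨l.length, hl, l.get, fun i => hY _ (l.get_mem i), by rw [List.ofFn_get]⟩

theorem wordSet_mono {H : Type*} [Group H] (Y : Set H) : Monotone (wordSet Y) :=
  fun _ _ hmn _ ⟨k, hk, hg⟩ => ⟨k, hk.trans hmn, hg⟩

theorem one_mem_wordSet {H : Type*} [Group H] (Y : Set H) (n : ℕ) : 1 ∈ wordSet Y n :=
  mem_wordSet_iff.2 ⟨[], by simp⟩

theorem eq_one_of_mem_wordSet_zero {H : Type*} [Group H] {Y : Set H} {h : H}
    (hh : h ∈ wordSet Y 0) : h = 1 := by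
  obtain ⟨l, hl, -, rfl⟩ := mem_wordSet_iff.1 hh
  simp [List.length_eq_zero_iff.1 (Nat.le_zero.1 hl)]

theorem mul_mem_wordSet {H : Type*} [Group H] {Y : Set H} {m n : ℕ} {a b : H}
    (ha : a ∈ wordSet Y m) (hb : b ∈ wordSet Y n) : a * b ∈ wordSet Y (m + n) := by
  obtain ⟨l, hl, hlY, rfl⟩ := mem_wordSet_iff.1 ha
  obtain ⟨k, hk, hkY, rfl⟩ := mem_wordSet_iff.1 hb
  refine mem_wordSet_iff.2 ⟨l ++ k, ?_, fun x hx => ?_, List.prod_append⟩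
  · rw [List.length_append]
    exact add_le_add hl hk
  · exact (List.mem_append.1 hx).elim (hlY x) (hkY x)

theorem inv_mem_wordSet {H : Type*} [Group H] {Y : Set H} {n : ℕ} {a : H}
    (ha : a ∈ wordSet Y n) : a⁻¹ ∈ wordSet Y n := by
  obtain ⟨l, hl, hlY, rfl⟩ := mem_wordSet_iff.1 ha
  refine mem_wordSet_iff.2
    ⟨(l.map (·⁻¹)).reverse, by simpa using hl, fun x hx => ?_, (List.prod_inv_reverse l).symm⟩
  obtain ⟨y, hy, rfl⟩ := List.mem_map.1 (List.mem_reverse.1 hx)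
  simpa using (hlY y hy).symm

theorem exists_mem_wordSet_of_mem_closure {H : Type*} [Group H] {Y : Set H} {h : H}
    (hh : h ∈ Subgroup.closure Y) : ∃ n, h ∈ wordSet Y n := by
  induction hh using Subgroup.closure_induction with
  | mem x hx => exact ⟨1, mem_wordSet_iff.2 ⟨[x], by simp [hx]⟩⟩
  | one => exact ⟨0, one_mem_wordSet Y 0⟩
  | mul x y _ _ hx hy =>
    obtain ⟨m, hm⟩ := hx
    obtain ⟨n, hn⟩ := hy
    exact ⟨m + n, mul_mem_wordSet hm hn⟩
  | inv x _ hx => exact hx.imp fun _ => inv_mem_wordSet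

/-- The least `n` with `h ∈ wordSet Y n`; it is `0` if there is no such `n`. -/
noncomputable def wordLength {H : Type*} [Group H] (Y : Set H) (h : H) : ℕ :=
  sInf {n | h ∈ wordSet Y n}

theorem wordLength_le {H : Type*} [Group H] {Y : Set H} {n : ℕ} {h : H}
    (hh : h ∈ wordSet Y n) : wordLength Y h ≤ n :=
  Nat.sInf_le hh

theorem mem_wordSet_wordLength {H : Type*} [Group H] {Y : Set H}
    (hY : Subgroup.closure Y = ⊤) (h : H) : h ∈ wordSet Y (wordLength Y h) :=
  Nat.sInf_mem (exists_mem_wordSet_of_mem_closure (hY ▸ Subgroup.mem_top h))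

theorem wordLength_inv_le {H : Type*} [Group H] {Y : Set H}
    (hY : Subgroup.closure Y = ⊤) (h : H) : wordLength Y h⁻¹ ≤ wordLength Y h :=
  wordLength_le (inv_mem_wordSet (mem_wordSet_wordLength hY h))

/-- The left-invariant word metric of a generating set. -/
noncomputable abbrev wordMetric {H : Type*} [Group H] (Y : Set H)
    (hY : Subgroup.closure Y = ⊤) : MetricSpace H where
  dist a b := wordLength Y (a⁻¹ * b)
  dist_self a := by
    have : wordLength Y (1 : H) = 0 := Nat.le_zero.1 (wordLength_le (one_mem_wordSet Y 0))
    simp [this]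
  dist_comm a b := by
    have h₁ := wordLength_inv_le hY (a⁻¹ * b)
    have h₂ := wordLength_inv_le hY (b⁻¹ * a)
    rw [mul_inv_rev, inv_inv] at h₁ h₂
    exact congrArg Nat.cast (le_antisymm h₂ h₁)
  dist_triangle a b c := by
    have h := mul_mem_wordSet (mem_wordSet_wordLength hY (a⁻¹ * b))
      (mem_wordSet_wordLength hY (b⁻¹ * c))
    rw [mul_assoc, mul_inv_cancel_left] at h
    exact_mod_cast wordLength_le h
  eq_of_dist_eq_zero {a b} h := by
    have h₁ := mem_wordSet_wordLength hY (a⁻¹ * b)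
    rw [Nat.cast_eq_zero.1 h] at h₁
    exact inv_mul_eq_one.1 (eq_one_of_mem_wordSet_zero h₁)

/-- A generating set of a strongly bounded group generates it with bounded word length. -/
theorem StronglyBounded.exists_wordSet_eq_univ {H : Type} [Group H] (hsb : StronglyBounded H)
    {Y : Set H} (hY : Subgroup.closure Y = ⊤) : ∃ n, wordSet Y n = Set.univ := by
  let _ : MetricSpace H := wordMetric Y hY
  have hdist (a b : H) : dist a b = wordLength Y (a⁻¹ * b) := rfl
  have hiso (h : H) : Isometry (fun x : H => h • x) :=
    Isometry.of_dist_eq fun a b => by simp [hdist, mul_assoc]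
  obtain ⟨C, hC⟩ := Metric.isBounded_iff.1 (hsb H _ _ hiso 1)
  refine ⟨⌊C⌋₊, Set.eq_univ_of_forall fun h => ?_⟩
  have hle := hC (MulAction.mem_orbit_self (1 : H)) ⟨h, mul_one h⟩
  rw [hdist, inv_one, one_mul] at hle
  exact wordSet_mono Y (Nat.le_floor hle) (mem_wordSet_wordLength hY h)

theorem Jonsson.closure_eq_top {H : Type*} [Group H] (hj : Jonsson H) {Y : Set H}
    (hY : Cardinal.mk Y = Cardinal.mk H) : Subgroup.closure Y = ⊤ := by
  by_contra hne
  exact ((Cardinal.mk_le_mk_of_subset Subgroup.subset_closure).trans_lt (hj _ hne)).ne hY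

theorem stronglyBounded_jonsson_imp_bounded_generation {H : Type} [Group H]
    (hcof : Cardinal.aleph0 < (Cardinal.mk H).ord.cof)
    (hsb : StronglyBounded H) (hj : Jonsson H) :
    ∀ Y : Set H, Cardinal.mk Y = Cardinal.mk H →
      ∃ n : ℕ, wordSet Y n = Set.univ :=
  fun _ hY => hsb.exists_wordSet_eq_univ (hj.closure_eq_top hY)
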